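/- For every p ∈ [1,∞), the fractional cost of the adjusted correlation metric f on the positive edges satisfies Σ_{u∈V} ( Σ_{v∈N_u^+} f_uv )^p ≤ 2^p · [ (8^p/2 + 1) · ((20/3)^p + 2 + 2·4^p) + 8^p + 1 ] · OPT(p)^p. -/

import Mathlib

/-! Fix any clustering `c`, with disagreement vector `y`, and write `Δ u = |N⁺(u)|`; it suffices to
bound the fractional cost by a constant times `∑ y ^ p`. A positive edge `uv` inside a cluster
satisfies `d u v ≤ (y u + y v) / max (Δ u) (Δ v)`, because every element of the symmetric
difference of the two neighbourhoods is an endpoint of a disagreement at `u` or at `v`; positive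
edges across clusters are paid for by `y u` directly. Hence (`cost_le`)
the cost at `u` is at most `2 y u + Z u + X u`, where `Z` averages `y` over neighbours
(so `‖Z‖_p ≤ ‖y‖_p` by Jensen, `sum_nbrAvg_rpow_le`) and `X u` bounds the number of
edges rounded up to `1` because of `R₁`, within the cluster of `u`.

`X` is bounded one cluster `C` at a time (`cluster_le`).

* If some `v ∈ C ∩ R₁` has `y v < 0.15 Δ v`, then `|C| ≤ 1.15 Δ v`, and at least
  `3 Δ v` vertices `w ∉ C` satisfy `d v w ≤ 0.7`. Each of them has at least
  `0.15 max (Δ v) (Δ w)` positive neighbours in `C`, so `y w ≥ (3/23) |C|`, and the total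
  `|C| ^ (p + 1)` can be spread over these `w` with weights `|N⁺(w) ∩ C| / Δ w`. For fixed `w` these
  weights add up to `1` over all clusters.
* Otherwise every `v ∈ C ∩ R₁` has `y v ≥ 0.15 Δ v`, which with `|C| ≤ Δ v + y v` gives
  `|C| ≤ (23/3) y v`, and `∑_{u ∈ C} X u ^ p ≤ 2 |C ∩ R₁| |C| ^ p`. -/

open Finset

noncomputable section

variable {V : Type*} [Fintype V] [DecidableEq V]

/-- Positive neighborhood of `u` (including the positive self-loop at `u`). -/
def Nplus (E : V → V → Prop) [DecidableRel E] (u : V) : Finset V :=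
  insert u (Finset.univ.filter fun v => v ≠ u ∧ E u v)

/-- Negative neighborhood of `u`. -/
def Nminus (E : V → V → Prop) [DecidableRel E] (u : V) : Finset V :=
  Finset.univ.filter fun v => v ≠ u ∧ ¬ E u v

/-- The correlation metric `d`. -/
def corrDist (E : V → V → Prop) [DecidableRel E] (u v : V) : ℝ :=
  if u = v then 0
  else 1 - ((Nplus E u ∩ Nplus E v).card : ℝ) / ((Nplus E u ∪ Nplus E v).card : ℝ)

/-- The set `R₁` of vertices `u` with `|N_u^- ∩ {v : d_uv ≤ 0.7}| ≥ (10/3)·Δ_u`. -/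
def R1set (E : V → V → Prop) [DecidableRel E] : Finset V :=
  Finset.univ.filter fun u =>
    (10 / 3 : ℝ) * (Nplus E u).card ≤ ((Nminus E u).filter fun v => corrDist E u v ≤ 0.7).card

/-- The adjusted correlation metric `f`: start from `d`, round negative edges with
`d > 0.7` up to `1`, and set `f_uv = 1` for all `v ≠ u` whenever `u ∈ R₁`. -/
def adjDist (E : V → V → Prop) [DecidableRel E] (u v : V) : ℝ :=
  if u = v then 0
  else if u ∈ R1set E ∨ v ∈ R1set E then 1
  else if ¬ E u v ∧ 0.7 < corrDist E u v then 1
  else corrDist E u v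

/-- A clustering is encoded by a map `c : V → V`; the cluster `C(u)` is the fiber of `c` at `u`. -/
def clusterOf (c : V → V) (u : V) : Finset V :=
  Finset.univ.filter fun w => c w = c u

/-- The number of disagreements incident to `u` with respect to the clustering `c`. -/
def disag (E : V → V → Prop) [DecidableRel E] (c : V → V) (u : V) : ℕ :=
  (Finset.univ.filter fun v =>
    v ≠ u ∧ ((E u v ∧ c u ≠ c v) ∨ (¬ E u v ∧ c u = c v))).card

/-- `OPT(1)`: the minimum total number of disagreements over all clusterings. -/
def OPT1 (E : V → V → Prop) [DecidableRel E] : ℕ :=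
  Finset.univ.inf' ⟨id, Finset.mem_univ id⟩ fun c : V → V => ∑ u, disag E c u

/-- `OPT(p)`: the minimum `ℓ_p`-norm of the disagreement vector over all clusterings. -/
def OPTlp (E : V → V → Prop) [DecidableRel E] (p : ℝ) : ℝ :=
  Finset.univ.inf' ⟨id, Finset.mem_univ id⟩ fun c : V → V =>
    (∑ u, (disag E c u : ℝ) ^ p) ^ (1 / p)

/-- `OPT(∞)`: the minimum `ℓ_∞`-norm of the disagreement vector over all clusterings. -/
def OPTinf (E : V → V → Prop) [DecidableRel E] : ℕ :=
  Finset.univ.inf' ⟨id, Finset.mem_univ id⟩ fun c : V → V => Finset.univ.sup (disag E c)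

/-- The set of bad triangles: triples of distinct vertices spanning exactly two positive
edges and one negative edge. -/
def badTriangles (E : V → V → Prop) [DecidableRel E] : Finset (Finset V) :=
  Finset.univ.filter fun T =>
    ∃ u v w : V, u ≠ v ∧ u ≠ w ∧ v ≠ w ∧ T = {u, v, w} ∧ E u v ∧ E u w ∧ ¬ E v w

section Aux

variable (E : V → V → Prop) [DecidableRel E] (c : V → V)

/-- The set of vertices joined to `u` by an edge in disagreement with the clustering `c`. -/
def disSet (u : V) : Finset V :=
  Finset.univ.filter fun v =>
    v ≠ u ∧ ((E u v ∧ c u ≠ c v) ∨ (¬ E u v ∧ c u = c v))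

/-- The cluster with label `k`. -/
def fib (k : V) : Finset V := Finset.univ.filter fun w => c w = k

/-- The sum of `y v / max (Δ u) (Δ v)` over the positive neighbours `v` of `u`, including `u`. -/
def nbrAvg (u : V) : ℝ :=
  ∑ v ∈ Nplus E u, (disag E c v : ℝ) / max ((Nplus E u).card : ℝ) ((Nplus E v).card : ℝ)

/-- An upper bound for the number of positive edges at `u` inside its cluster that meet `R₁`. -/
def roundCost (u : V) : ℝ :=
  if u ∈ R1set E then ((fib c (c u)).card : ℝ) else ((fib c (c u) ∩ R1set E).card : ℝ)

lemma disag_eq (u : V) : disag E c u = (disSet E c u).card := rfl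

lemma mem_disSet {u v : V} : v ∈ disSet E c u ↔
    v ≠ u ∧ ((E u v ∧ c u ≠ c v) ∨ (¬ E u v ∧ c u = c v)) := by
  simp [disSet]

lemma mem_fib {k w : V} : w ∈ fib c k ↔ c w = k := by simp [fib]

lemma mem_Nplus {u v : V} : v ∈ Nplus E u ↔ v = u ∨ E u v := by
  simp only [Nplus, mem_insert, mem_filter, mem_univ, true_and]; tauto

lemma mem_Nminus {u v : V} : v ∈ Nminus E u ↔ v ≠ u ∧ ¬ E u v := by
  simp [Nminus]

lemma card_Nplus_pos (u : V) : (0 : ℝ) < (Nplus E u).card := by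
  exact_mod_cast Finset.card_pos.mpr ⟨u, by simp [Nplus]⟩

lemma card_union_pos (u v : V) : (0 : ℝ) < (Nplus E u ∪ Nplus E v).card :=
  (card_Nplus_pos E u).trans_le (by exact_mod_cast Finset.card_le_card subset_union_left)

lemma max_le_card_union (u v : V) :
    max ((Nplus E u).card : ℝ) ((Nplus E v).card : ℝ) ≤ (Nplus E u ∪ Nplus E v).card :=
  max_le (by exact_mod_cast Finset.card_le_card subset_union_left)
    (by exact_mod_cast Finset.card_le_card subset_union_right)

/-! ### Pointwise and vertexwise bounds on the cost -/

lemma corrDist_le_one (u v : V) : corrDist E u v ≤ 1 := by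
  unfold corrDist
  split_ifs
  · norm_num
  · have : (0 : ℝ) ≤ ((Nplus E u ∩ Nplus E v).card : ℝ) / ((Nplus E u ∪ Nplus E v).card : ℝ) := by
      positivity
    linarith

/-- Every vertex of `N⁺(u) ∪ N⁺(v)` outside the intersection lies on a disagreement at `u` or `v`,
while the union has at least `max (Δ u) (Δ v)` elements. -/
lemma corrDist_le (hsymm : ∀ u v, E u v ↔ E v u) {u v : V} (he : E u v) (hc : c u = c v) :
    corrDist E u v ≤ ((disag E c u : ℝ) + disag E c v) /
      max ((Nplus E u).card : ℝ) ((Nplus E v).card : ℝ) := by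
  have hpos := card_union_pos E u v
  have hm : (0 : ℝ) < max ((Nplus E u).card : ℝ) ((Nplus E v).card : ℝ) :=
    lt_max_of_lt_left (card_Nplus_pos E u)
  unfold corrDist
  split_ifs with huv
  · positivity
  have hsub : Nplus E u ∪ Nplus E v ⊆
      (Nplus E u ∩ Nplus E v) ∪ (disSet E c u ∪ disSet E c v) := by
    intro w
    have := hsymm u v
    simp only [mem_union, mem_inter, mem_Nplus, mem_disSet]
    by_cases h1 : w = u
    · subst h1; tauto
    by_cases h2 : w = v
    · subst h2; tauto
    rw [hc]
    tauto
  have hcard : ((Nplus E u ∪ Nplus E v).card : ℝ) ≤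
      (Nplus E u ∩ Nplus E v).card + ((disag E c u : ℝ) + disag E c v) := by
    rw [disag_eq, disag_eq]
    exact_mod_cast (Finset.card_le_card hsub).trans
      ((Finset.card_union_le _ _).trans (Nat.add_le_add_left (Finset.card_union_le _ _) _))
  calc 1 - ((Nplus E u ∩ Nplus E v).card : ℝ) / ((Nplus E u ∪ Nplus E v).card : ℝ)
      = (((Nplus E u ∪ Nplus E v).card : ℝ) - (Nplus E u ∩ Nplus E v).card) /
        ((Nplus E u ∪ Nplus E v).card : ℝ) := by field_simp
    _ ≤ ((disag E c u : ℝ) + disag E c v) / ((Nplus E u ∪ Nplus E v).card : ℝ) := by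
        gcongr; linarith
    _ ≤ _ := by
        gcongr
        exact max_le_card_union E u v

lemma adjDist_le (hsymm : ∀ u v, E u v ↔ E v u) {u v : V} (hv : v ∈ Nplus E u) :
    adjDist E u v ≤ (if v ∈ disSet E c u then (1 : ℝ) else 0)
      + ((disag E c u : ℝ) + disag E c v) / max ((Nplus E u).card : ℝ) ((Nplus E v).card : ℝ)
      + (if c v = c u ∧ (u ∈ R1set E ∨ v ∈ R1set E) then (1 : ℝ) else 0) := by
  have h0 : (0 : ℝ) ≤ ((disag E c u : ℝ) + disag E c v) /
      max ((Nplus E u).card : ℝ) ((Nplus E v).card : ℝ) := by positivity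
  have h1 : (0 : ℝ) ≤ (if v ∈ disSet E c u then (1 : ℝ) else 0) := by split_ifs <;> norm_num
  have h2 : (0 : ℝ) ≤ (if c v = c u ∧ (u ∈ R1set E ∨ v ∈ R1set E) then (1 : ℝ) else 0) := by
    split_ifs <;> norm_num
  by_cases huv : u = v
  · simp only [adjDist, if_pos huv]; linarith
  have he : E u v := ((mem_Nplus E).mp hv).resolve_left (Ne.symm huv)
  have hf1 : adjDist E u v ≤ 1 := by
    have := corrDist_le_one E u v
    unfold adjDist; split_ifs <;> linarith
  by_cases hc : c u = c v
  · by_cases hR : u ∈ R1set E ∨ v ∈ R1set E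
    · rw [if_pos (show c v = c u ∧ (u ∈ R1set E ∨ v ∈ R1set E) from ⟨hc.symm, hR⟩)]; linarith
    · have : adjDist E u v = corrDist E u v := by simp [adjDist, huv, hR, he]
      have := corrDist_le E c hsymm he hc
      linarith
  · have : v ∈ disSet E c u := (mem_disSet E c).mpr ⟨Ne.symm huv, Or.inl ⟨he, hc⟩⟩
    rw [if_pos this]; linarith

/-- The three terms pay for disagreements at `u` and the `y u` part of `corrDist_le`, for its `y v`
part, and for the rounded edges inside the cluster. -/
lemma cost_le (hsymm : ∀ u v, E u v ↔ E v u) (u : V) :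
    ∑ v ∈ Nplus E u, adjDist E u v ≤
      2 * (disag E c u : ℝ) + nbrAvg E c u + roundCost E c u := by
  refine (Finset.sum_le_sum fun v hv => adjDist_le E c hsymm hv).trans ?_
  simp only [add_div, Finset.sum_add_distrib]
  have h1 : ∑ v ∈ Nplus E u, (if v ∈ disSet E c u then (1 : ℝ) else 0) ≤ disag E c u := by
    rw [Finset.sum_boole, disag_eq]
    exact_mod_cast Finset.card_le_card (s := {v ∈ Nplus E u | v ∈ disSet E c u})
      fun v hv => (mem_filter.mp hv).2
  have h2 : ∑ v ∈ Nplus E u, (disag E c u : ℝ) /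
      max ((Nplus E u).card : ℝ) ((Nplus E v).card : ℝ) ≤ disag E c u := by
    have hp := card_Nplus_pos E u
    calc _ ≤ ∑ v ∈ Nplus E u, (disag E c u : ℝ) / (Nplus E u).card := by
          refine Finset.sum_le_sum fun v _ => ?_
          gcongr
          exact le_max_left _ _
      _ = disag E c u := by
          rw [Finset.sum_const, nsmul_eq_mul]; field_simp
  have h3 : ∑ v ∈ Nplus E u,
      (if c v = c u ∧ (u ∈ R1set E ∨ v ∈ R1set E) then (1 : ℝ) else 0) ≤ roundCost E c u := by
    rw [Finset.sum_boole, roundCost]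
    split_ifs with hu
    · refine mod_cast Finset.card_le_card fun v hv => ?_
      exact (mem_fib c).mpr (mem_filter.mp hv).2.1
    · refine mod_cast Finset.card_le_card fun v hv => ?_
      obtain ⟨_, h, h'⟩ := mem_filter.mp hv
      exact mem_inter.mpr ⟨(mem_fib c).mpr h, h'.resolve_left hu⟩
  have h4 : nbrAvg E c u = ∑ v ∈ Nplus E u, (disag E c v : ℝ) /
      max ((Nplus E u).card : ℝ) ((Nplus E v).card : ℝ) := rfl
  linarith

/-! ### The averaged disagreements -/

lemma sum_Nplus_comm (hsymm : ∀ u v, E u v ↔ E v u) (g : V → ℝ) :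
    ∑ u, ∑ v ∈ Nplus E u, g v = ∑ v, ((Nplus E v).card : ℝ) * g v := by
  rw [Finset.sum_comm' (t' := Finset.univ) (s' := fun v => Nplus E v)]
  · simp
  · intro u v
    have := hsymm u v
    simp only [mem_univ, mem_Nplus, true_and, and_true]
    constructor <;> rintro (h | h) <;> first | exact Or.inl h.symm | (right; tauto)

lemma sum_nbrAvg_rpow_le (hsymm : ∀ u v, E u v ↔ E v u) {p : ℝ} (hp : 1 ≤ p) :
    ∑ u, nbrAvg E c u ^ p ≤ ∑ v, (disag E c v : ℝ) ^ p := by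
  have hterm : ∀ u, nbrAvg E c u ^ p ≤
      ∑ v ∈ Nplus E u, (disag E c v : ℝ) ^ p / (Nplus E v).card := by
    intro u
    refine (Real.rpow_sum_le_const_mul_sum_rpow_of_nonneg (Nplus E u) hp
      (fun v _ => by positivity)).trans ?_
    rw [Finset.mul_sum]
    refine Finset.sum_le_sum fun v _ => ?_
    have hu := card_Nplus_pos E u
    have hv := card_Nplus_pos E v
    set m := max ((Nplus E u).card : ℝ) ((Nplus E v).card : ℝ)
    have hum : ((Nplus E u).card : ℝ) ≤ m := le_max_left _ _
    have hvm : ((Nplus E v).card : ℝ) ≤ m := le_max_right _ _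
    have hm : 0 < m := hu.trans_le hum
    rw [Real.div_rpow (by positivity) hm.le]
    calc ((Nplus E u).card : ℝ) ^ (p - 1) * ((disag E c v : ℝ) ^ p / m ^ p)
        ≤ m ^ (p - 1) * ((disag E c v : ℝ) ^ p / m ^ p) := by
          gcongr
      _ = (disag E c v : ℝ) ^ p / m := by
          rw [Real.rpow_sub_one hm.ne']
          have : m ^ p ≠ 0 := (Real.rpow_pos_of_pos hm p).ne'
          field_simp
      _ ≤ _ := by gcongr
  refine (Finset.sum_le_sum fun u _ => hterm u).trans ?_
  rw [sum_Nplus_comm E hsymm (fun v => (disag E c v : ℝ) ^ p / (Nplus E v).card)]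
  refine le_of_eq (Finset.sum_congr rfl fun v _ => ?_)
  have hv := card_Nplus_pos E v
  field_simp

/-! ### Charging the edges rounded because of `R₁` -/

lemma card_fib_le (v : V) :
    ((fib c (c v)).card : ℝ) ≤ (Nplus E v).card + disag E c v := by
  rw [disag_eq]
  have hsub : fib c (c v) ⊆ Nplus E v ∪ disSet E c v := by
    intro w
    simp only [mem_union, mem_Nplus, mem_disSet, mem_fib]
    intro h
    rw [h]
    tauto
  exact_mod_cast (Finset.card_le_card hsub).trans (Finset.card_union_le _ _)

/-- A vertex `w` outside the cluster of `v` but close to `v` in the metric `d` has many positive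
neighbours in that cluster, provided `v` has few disagreements. -/
lemma inter_fib_ge {v w : V} (hw : w ≠ v)
    (hd : corrDist E v w ≤ 0.7) (hy : (disag E c v : ℝ) < 0.15 * (Nplus E v).card) :
    0.15 * max ((Nplus E v).card : ℝ) ((Nplus E w).card : ℝ) ≤
      (Nplus E w ∩ fib c (c v)).card := by
  have hpos := card_union_pos E v w
  have hmax := max_le_card_union E v w
  have hd' : 0.3 * ((Nplus E v ∪ Nplus E w).card : ℝ) ≤ (Nplus E v ∩ Nplus E w).card := by
    rw [corrDist, if_neg (Ne.symm hw)] at hd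
    rw [← le_div_iff₀ hpos]
    linarith
  have hsub : Nplus E v ∩ Nplus E w ⊆ (Nplus E w ∩ fib c (c v)) ∪ disSet E c v := by
    intro x
    simp only [mem_union, mem_inter, mem_Nplus, mem_disSet, mem_fib]
    rintro ⟨h1, h2⟩
    by_cases hx : c x = c v
    · exact Or.inl ⟨h2, hx⟩
    · have hxv : x ≠ v := fun h => hx (by rw [h])
      exact Or.inr ⟨hxv, Or.inl ⟨h1.resolve_left hxv, Ne.symm hx⟩⟩
  have hcard : ((Nplus E v ∩ Nplus E w).card : ℝ) ≤
      (Nplus E w ∩ fib c (c v)).card + disag E c v := by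
    rw [disag_eq]
    exact_mod_cast (Finset.card_le_card hsub).trans (Finset.card_union_le _ _)
  have := le_max_left ((Nplus E v).card : ℝ) ((Nplus E w).card : ℝ)
  linarith

lemma inter_fib_le_disag {k w : V} (hw : c w ≠ k) :
    ((Nplus E w ∩ fib c k).card : ℝ) ≤ disag E c w := by
  rw [disag_eq]
  refine mod_cast Finset.card_le_card fun x => ?_
  simp only [mem_inter, mem_Nplus, mem_disSet, mem_fib]
  rintro ⟨h1, h2⟩
  have hx : x ≠ w := fun h => hw (by rw [← h, h2])
  exact ⟨hx, Or.inl ⟨h1.resolve_left hx, by rwa [h2]⟩⟩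

/-- The charging scheme for a cluster with a vertex of `R₁` having few disagreements: the cost
`|C| ^ (p + 1)` is spread over vertices outside the cluster. -/
lemma good_cluster_le {p : ℝ} (hp : 1 ≤ p) {v : V}
    (hv : v ∈ R1set E) (hy : (disag E c v : ℝ) < 0.15 * (Nplus E v).card) :
    ((fib c (c v)).card : ℝ) * ((fib c (c v)).card : ℝ) ^ p ≤
      3 * ∑ w, ((Nplus E w ∩ fib c (c v)).card : ℝ) / (Nplus E w).card
        * (23 / 3 * (disag E c w : ℝ)) ^ p := by
  have hC := card_fib_le E c v
  have hΔ := card_Nplus_pos E v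
  set n : ℝ := ((fib c (c v)).card : ℝ)
  set T := (Nminus E v).filter fun w => corrDist E v w ≤ 0.7 with hT
  set S := T \ disSet E c v with hS
  have hTcard : (10 / 3 : ℝ) * (Nplus E v).card ≤ T.card := (mem_filter.mp hv).2
  have hScard : (T.card : ℝ) ≤ S.card + disag E c v := by
    rw [disag_eq]
    have : T ⊆ S ∪ disSet E c v := by
      intro x hx; simp only [hS, mem_union, mem_sdiff]; tauto
    exact_mod_cast (Finset.card_le_card this).trans (Finset.card_union_le _ _)
  -- `3 Δ ≤ |S|` and `|C| ≤ 1.15 Δ`, hence a ratio of at least `20/9`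
  have hnS : n ≤ 9 / 20 * S.card := by linarith
  have hn0 : 0 ≤ n := Nat.cast_nonneg _
  have hterm : ∀ w ∈ S, n ^ p ≤ 20 / 3 *
      (((Nplus E w ∩ fib c (c v)).card : ℝ) / (Nplus E w).card
        * (23 / 3 * (disag E c w : ℝ)) ^ p) := by
    intro w hw
    simp only [hS, hT, mem_sdiff, mem_filter, mem_Nminus, mem_disSet] at hw
    obtain ⟨⟨⟨hwv, hneg⟩, hd⟩, hdis⟩ := hw
    have hcw : c w ≠ c v := fun h => hdis ⟨hwv, Or.inr ⟨hneg, h.symm⟩⟩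
    have h1 := inter_fib_ge E c hwv hd hy
    have h2 := inter_fib_le_disag E c hcw
    have h3 := le_max_left ((Nplus E v).card : ℝ) ((Nplus E w).card : ℝ)
    have h4 := le_max_right ((Nplus E v).card : ℝ) ((Nplus E w).card : ℝ)
    have hw0 := card_Nplus_pos E w
    have h5 : n ^ p ≤ (23 / 3 * (disag E c w : ℝ)) ^ p :=
      Real.rpow_le_rpow hn0 (by linarith) (by linarith)
    have h6 : 1 ≤ 20 / 3 * (((Nplus E w ∩ fib c (c v)).card : ℝ) / (Nplus E w).card) := by
      rw [mul_div_assoc', le_div_iff₀ hw0]; linarith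
    have h7 : 0 ≤ (23 / 3 * (disag E c w : ℝ)) ^ p := by positivity
    rw [← mul_assoc]
    nlinarith
  calc n * n ^ p ≤ 9 / 20 * S.card * n ^ p := by gcongr
    _ = 9 / 20 * ∑ w ∈ S, n ^ p := by rw [Finset.sum_const, nsmul_eq_mul]; ring
    _ ≤ 9 / 20 * ∑ w ∈ S, 20 / 3 * (((Nplus E w ∩ fib c (c v)).card : ℝ) / (Nplus E w).card
        * (23 / 3 * (disag E c w : ℝ)) ^ p) := by
        gcongr with w hw; exact hterm w hw
    _ ≤ 9 / 20 * ∑ w, 20 / 3 * (((Nplus E w ∩ fib c (c v)).card : ℝ) / (Nplus E w).card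
        * (23 / 3 * (disag E c w : ℝ)) ^ p) := by
        refine mul_le_mul_of_nonneg_left ?_ (by norm_num)
        exact Finset.sum_le_sum_of_subset_of_nonneg (Finset.subset_univ _)
          fun _ _ _ => by positivity
    _ = _ := by rw [← Finset.mul_sum]; ring

lemma roundCost_nonneg (u : V) : 0 ≤ roundCost E c u := by
  unfold roundCost; split_ifs <;> positivity

lemma roundCost_le (u : V) : roundCost E c u ≤ (fib c (c u)).card := by
  unfold roundCost
  split_ifs
  · exact le_rfl
  · exact_mod_cast Finset.card_le_card inter_subset_left

/-- The charging scheme for a cluster whose vertices in `R₁` all have many disagreements. -/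
lemma bad_cluster_le {p : ℝ} (hp : 1 ≤ p) (k : V)
    (hk : ∀ v ∈ fib c k, v ∈ R1set E → 0.15 * ((Nplus E v).card : ℝ) ≤ disag E c v) :
    ∑ u ∈ fib c k, roundCost E c u ^ p ≤
      2 * ∑ v ∈ fib c k, (23 / 3 * (disag E c v : ℝ)) ^ p := by
  set n : ℝ := ((fib c k).card : ℝ) with hn
  set B := fib c k ∩ R1set E with hB
  have hn0 : 0 ≤ n := Nat.cast_nonneg _
  have hr0 : (0 : ℝ) ≤ B.card := Nat.cast_nonneg _
  have hrn : (B.card : ℝ) ≤ n := Nat.cast_le.mpr (Finset.card_le_card inter_subset_left)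
  have hpt : ∀ u ∈ fib c k, roundCost E c u ^ p ≤
      (if u ∈ R1set E then n ^ p else 0) + (B.card : ℝ) ^ p := by
    intro u hu
    have hcu := (mem_fib c).mp hu
    have : 0 ≤ (B.card : ℝ) ^ p := by positivity
    unfold roundCost
    rw [hcu]
    split_ifs <;> linarith
  -- `|C| r ^ p ≤ r |C| ^ p` since `r ≤ |C|` and `p ≥ 1`
  have hswap : n * (B.card : ℝ) ^ p ≤ B.card * n ^ p := by
    rcases hr0.eq_or_lt with h | h
    · rw [← h, Real.zero_rpow (by linarith)]; simp
    · have hn1 : 0 < n := h.trans_le hrn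
      have e : ∀ x : ℝ, 0 < x → x ^ p = x * x ^ (p - 1) := fun x hx => by
        rw [Real.rpow_sub_one hx.ne']; field_simp
      rw [e _ h, e _ hn1]
      have : (B.card : ℝ) ^ (p - 1) ≤ n ^ (p - 1) := Real.rpow_le_rpow hr0 hrn (by linarith)
      have := mul_le_mul_of_nonneg_left this (mul_nonneg hn0 hr0)
      linarith
  have hBpt : ∀ v ∈ B, n ^ p ≤ (23 / 3 * (disag E c v : ℝ)) ^ p := by
    intro v hv
    obtain ⟨hv1, hv2⟩ := mem_inter.mp hv
    have h1 := hk v hv1 hv2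
    have h2 := card_fib_le E c v
    rw [(mem_fib c).mp hv1, ← hn] at h2
    exact Real.rpow_le_rpow hn0 (by linarith) (by linarith)
  calc ∑ u ∈ fib c k, roundCost E c u ^ p
      ≤ ∑ u ∈ fib c k, ((if u ∈ R1set E then n ^ p else 0) + (B.card : ℝ) ^ p) :=
        Finset.sum_le_sum hpt
    _ = B.card * n ^ p + n * (B.card : ℝ) ^ p := by
        rw [Finset.sum_add_distrib, ← Finset.sum_filter, Finset.filter_mem_eq_inter]
        simp [hB, hn]
    _ ≤ 2 * (B.card * n ^ p) := by linarith
    _ = 2 * ∑ v ∈ B, n ^ p := by rw [Finset.sum_const, nsmul_eq_mul]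
    _ ≤ 2 * ∑ v ∈ B, (23 / 3 * (disag E c v : ℝ)) ^ p := by
        exact mul_le_mul_of_nonneg_left (Finset.sum_le_sum hBpt) (by norm_num)
    _ ≤ _ := by
        refine mul_le_mul_of_nonneg_left ?_ (by norm_num)
        exact Finset.sum_le_sum_of_subset_of_nonneg inter_subset_left
          fun _ _ _ => by positivity

/-- Both charging schemes in one bound, in a form that can be summed over all labels `k`. -/
lemma cluster_le {p : ℝ} (hp : 1 ≤ p) (k : V) :
    ∑ u ∈ fib c k, roundCost E c u ^ p ≤
      3 * ∑ w, ((Nplus E w ∩ fib c k).card : ℝ) / (Nplus E w).card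
        * (23 / 3 * (disag E c w : ℝ)) ^ p
      + 2 * ∑ v ∈ fib c k, (23 / 3 * (disag E c v : ℝ)) ^ p := by
  have h1 : 0 ≤ ∑ w, ((Nplus E w ∩ fib c k).card : ℝ) / (Nplus E w).card
        * (23 / 3 * (disag E c w : ℝ)) ^ p := Finset.sum_nonneg fun _ _ => by positivity
  have h2 : 0 ≤ ∑ v ∈ fib c k, (23 / 3 * (disag E c v : ℝ)) ^ p :=
    Finset.sum_nonneg fun _ _ => by positivity
  by_cases hg : ∃ v ∈ fib c k, v ∈ R1set E ∧ (disag E c v : ℝ) < 0.15 * (Nplus E v).card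
  · obtain ⟨v, hvk, hv, hy⟩ := hg
    have hg := good_cluster_le E c hp hv hy
    rw [(mem_fib c).mp hvk] at hg
    have : ∑ u ∈ fib c k, roundCost E c u ^ p ≤
        ((fib c k).card : ℝ) * ((fib c k).card : ℝ) ^ p := by
      rw [← nsmul_eq_mul, ← Finset.sum_const]
      refine Finset.sum_le_sum fun u hu => ?_
      have := roundCost_le E c u
      rw [(mem_fib c).mp hu] at this
      exact Real.rpow_le_rpow (roundCost_nonneg E c u) this (by linarith)
    linarith
  · push Not at hg
    have := bad_cluster_le E c hp k hg
    linarith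

lemma sum_roundCost_rpow_le {p : ℝ} (hp : 1 ≤ p) :
    ∑ u, roundCost E c u ^ p ≤ 5 * ∑ v, (23 / 3 * (disag E c v : ℝ)) ^ p := by
  have hfib : ∀ g : V → ℝ, ∑ k, ∑ u ∈ fib c k, g u = ∑ u, g u := fun g =>
    Finset.sum_fiberwise Finset.univ c g
  rw [← hfib]
  refine (Finset.sum_le_sum fun k _ => cluster_le E c hp k).trans ?_
  rw [Finset.sum_add_distrib, ← Finset.mul_sum, ← Finset.mul_sum, hfib, Finset.sum_comm]
  have : ∀ w, ∑ k, ((Nplus E w ∩ fib c k).card : ℝ) / (Nplus E w).card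
        * (23 / 3 * (disag E c w : ℝ)) ^ p = (23 / 3 * (disag E c w : ℝ)) ^ p := by
    intro w
    rw [← Finset.sum_mul, ← Finset.sum_div]
    have hs : ∑ k, ((Nplus E w ∩ fib c k).card : ℝ) = (Nplus E w).card := by
      have := Finset.card_eq_sum_card_fiberwise (f := c) (s := Nplus E w) (t := Finset.univ)
        (fun _ _ => by simp)
      rw [this, Nat.cast_sum]
      refine Finset.sum_congr rfl fun k _ => ?_
      congr 2
      ext x
      simp [mem_fib]
    rw [hs, div_self (card_Nplus_pos E w).ne', one_mul]
  rw [Finset.sum_congr rfl fun w _ => this w]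
  linarith

/-! ### Combining the bounds -/

lemma add_three_rpow_le {p : ℝ} (hp : 1 ≤ p) {x y z : ℝ} (hx : 0 ≤ x) (hy : 0 ≤ y) (hz : 0 ≤ z) :
    (x + y + z) ^ p ≤ (3 : ℝ) ^ (p - 1) * (x ^ p + y ^ p + z ^ p) := by
  have := Real.rpow_sum_le_const_mul_sum_rpow_of_nonneg (f := ![x, y, z]) Finset.univ hp
    (fun i _ => by fin_cases i <;> simpa)
  simpa [Fin.sum_univ_three] using this

lemma const_le {p : ℝ} (hp : 1 ≤ p) :
    (3 : ℝ) ^ (p - 1) * ((2 : ℝ) ^ p + 1 + 5 * (23 / 3 : ℝ) ^ p) ≤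
      (2 : ℝ) ^ p *
        (((8 : ℝ) ^ p / 2 + 1) * ((20 / 3 : ℝ) ^ p + 2 + 2 * (4 : ℝ) ^ p)
          + (8 : ℝ) ^ p + 1) := by
  have hp0 : 0 ≤ p := by linarith
  have h1 : (1 : ℝ) ≤ 2 ^ p := Real.one_le_rpow (by norm_num) hp0
  have h4 : (4 : ℝ) ≤ 4 ^ p := Real.self_le_rpow_of_one_le (by norm_num) hp
  have h2 : (2 : ℝ) * 2 ^ p ≤ (23 / 3 : ℝ) ^ p := by
    calc (2 : ℝ) * 2 ^ p ≤ 2 ^ p * 2 ^ p := by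
          gcongr; exact Real.self_le_rpow_of_one_le (by norm_num) hp
      _ = (2 * 2 : ℝ) ^ p := (Real.mul_rpow (by norm_num) (by norm_num)).symm
      _ ≤ _ := Real.rpow_le_rpow (by norm_num) (by norm_num) hp0
  -- the left side is at most `2 * 23 ^ p`, and `4 * 23 ^ p ≤ (4 * 23) ^ p ≤ (2 * 8 * (20 / 3)) ^ p`
  have h3 : (4 : ℝ) ^ p * ((3 : ℝ) ^ p * (23 / 3 : ℝ) ^ p) ≤
      (2 : ℝ) ^ p * ((8 : ℝ) ^ p * (20 / 3 : ℝ) ^ p) := by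
    rw [← Real.mul_rpow (by norm_num) (by norm_num), ← Real.mul_rpow (by norm_num) (by norm_num),
      ← Real.mul_rpow (by norm_num) (by norm_num), ← Real.mul_rpow (by norm_num) (by norm_num)]
    exact Real.rpow_le_rpow (by norm_num) (by norm_num) hp0
  have h5 : (0 : ℝ) < 3 ^ p := by positivity
  have h6 : (0 : ℝ) < (23 / 3) ^ p := by positivity
  have h7 : 4 * ((3 : ℝ) ^ p * (23 / 3 : ℝ) ^ p) ≤ 4 ^ p * ((3 : ℝ) ^ p * (23 / 3 : ℝ) ^ p) := by
    gcongr
  calc (3 : ℝ) ^ (p - 1) * ((2 : ℝ) ^ p + 1 + 5 * (23 / 3 : ℝ) ^ p)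
      ≤ (3 : ℝ) ^ (p - 1) * (6 * (23 / 3 : ℝ) ^ p) := by gcongr; linarith
    _ = 2 * ((3 : ℝ) ^ p * (23 / 3 : ℝ) ^ p) := by
        rw [Real.rpow_sub_one (by norm_num)]; ring
    _ ≤ (2 : ℝ) ^ p * ((8 : ℝ) ^ p / 2 * (20 / 3 : ℝ) ^ p) := by linarith
    _ ≤ _ := by
        have e8 : (0 : ℝ) < 8 ^ p := by positivity
        have e20 : (0 : ℝ) < (20 / 3) ^ p := by positivity
        have := mul_pos e8 (by positivity : (0 : ℝ) < 4 ^ p)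
        gcongr
        linarith

lemma cost_rpow_le (hsymm : ∀ u v, E u v ↔ E v u) {p : ℝ} (hp : 1 ≤ p) :
    ∑ u, (∑ v ∈ Nplus E u, adjDist E u v) ^ p ≤
      (3 : ℝ) ^ (p - 1) * ((2 : ℝ) ^ p + 1 + 5 * (23 / 3 : ℝ) ^ p) *
        ∑ u, (disag E c u : ℝ) ^ p := by
  have hd0 : ∀ u v, 0 ≤ adjDist E u v := by
    intro u v
    have : 0 ≤ corrDist E u v := by
      unfold corrDist
      split_ifs
      · exact le_rfl
      · rw [sub_nonneg]
        refine div_le_one_of_le₀ ?_ (Nat.cast_nonneg _)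
        exact_mod_cast Finset.card_le_card (inter_subset_left.trans subset_union_left)
    unfold adjDist
    split_ifs <;> first | assumption | norm_num
  have hZ0 : ∀ u, 0 ≤ nbrAvg E c u := fun u => Finset.sum_nonneg fun _ _ => by positivity
  have hpt : ∀ u, (∑ v ∈ Nplus E u, adjDist E u v) ^ p ≤ (3 : ℝ) ^ (p - 1) *
      ((2 * (disag E c u : ℝ)) ^ p + nbrAvg E c u ^ p + roundCost E c u ^ p) := fun u =>
    (Real.rpow_le_rpow (Finset.sum_nonneg fun v _ => hd0 u v) (cost_le E c hsymm u)
      (by linarith)).trans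
      (add_three_rpow_le hp (by positivity) (hZ0 u) (roundCost_nonneg E c u))
  refine (Finset.sum_le_sum fun u _ => hpt u).trans ?_
  rw [← Finset.mul_sum, mul_assoc]
  gcongr
  have hX := sum_roundCost_rpow_le E c hp
  have hZ := sum_nbrAvg_rpow_le E c hsymm hp
  have hs : ∀ a : ℝ, 0 ≤ a → ∑ u, (a * (disag E c u : ℝ)) ^ p =
      a ^ p * ∑ u, (disag E c u : ℝ) ^ p := by
    intro a ha
    rw [Finset.mul_sum]
    exact Finset.sum_congr rfl fun u _ => Real.mul_rpow ha (Nat.cast_nonneg _)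
  rw [hs _ (by norm_num)] at hX
  rw [Finset.sum_add_distrib, Finset.sum_add_distrib, hs _ (by norm_num)]
  linarith

end Aux

/-- bound on the fractional cost of the adjusted correlation metric on the
positive edges in the `ℓ_p`-norm objective. -/
theorem lp_frac_cost_pos (E : V → V → Prop) [DecidableRel E]
    (hsymm : ∀ u v, E u v ↔ E v u) (p : ℝ) (hp : 1 ≤ p) :
    ∑ u, (∑ v ∈ Nplus E u, adjDist E u v) ^ p ≤
      (2 : ℝ) ^ p *
        (((8 : ℝ) ^ p / 2 + 1) * ((20 / 3 : ℝ) ^ p + 2 + 2 * (4 : ℝ) ^ p)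
          + (8 : ℝ) ^ p + 1) * OPTlp E p ^ p := by
  obtain ⟨c, -, hc⟩ := Finset.exists_mem_eq_inf' (s := (Finset.univ : Finset (V → V)))
    ⟨id, Finset.mem_univ id⟩ fun c : V → V => (∑ u, (disag E c u : ℝ) ^ p) ^ (1 / p)
  have hopt : OPTlp E p ^ p = ∑ u, (disag E c u : ℝ) ^ p := by
    rw [OPTlp, hc, ← Real.rpow_mul (Finset.sum_nonneg fun _ _ => by positivity),
      one_div_mul_cancel (by linarith), Real.rpow_one]
  rw [hopt]
  exact (cost_rpow_le E c hsymm hp).trans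
    (mul_le_mul_of_nonneg_right (const_le hp) (Finset.sum_nonneg fun _ _ => by positivity))
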